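/- Let d, m ≥ 1 and r ≥ 0. Let E_1,…,E_m be nonzero idempotent d × d matrices with nonnegative integer entries, and let N_1,…,N_r be d × d matrices with nonnegative integer entries satisfying N_t² = 0 for all t. Suppose that X := E_1 + ⋯ + E_m + N_1 + ⋯ + N_r has every entry strictly positive and satisfies X² = mX. Then each E_s has exactly one diagonal entry equal to 1 and all its other diagonal entries equal to 0; moreover, if E_s and E_{s′} have their unit diagonal entry in the same position, then E_s E_{s′} ≠ 0. -/

import Mathlib

open Matrix

theorem trace_pos_of_idem {d : ℕ} (E : Matrix (Fin d) (Fin d) ℕ) (h0 : E ≠ 0)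
    (hE : E * E = E) : 1 ≤ E.trace := by
  by_contra hlt
  have htr : ∑ i, E i i = 0 := by
    have : E.trace = 0 := by omega
    simpa [Matrix.trace] using this
  have hdiag : ∀ i, E i i = 0 := fun i => (Finset.sum_eq_zero_iff.mp htr) i (Finset.mem_univ i)
  have hmul : ∀ i j, E i j = ∑ k, E i k * E k j := fun i j => by
    rw [← Matrix.mul_apply, hE]
  let R : Fin d → Fin d → Prop := fun i j => 0 < E i j
  haveI : IsTrans (Fin d) R := ⟨fun i k j h1 h2 => by
    change 0 < E i j
    rw [hmul]
    exact lt_of_lt_of_le (Nat.mul_pos h1 h2)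
      (Finset.single_le_sum (f := fun k => E i k * E k j) (fun _ _ => Nat.zero_le _)
        (Finset.mem_univ k))⟩
  haveI : Std.Irrefl R := ⟨fun i h => by
    have h' : 0 < E i i := h
    rw [hdiag] at h'
    exact absurd h' (lt_irrefl _)⟩
  have wf : WellFounded R := Finite.wellFounded_of_trans_of_irrefl R
  apply h0
  ext i j
  by_contra hij
  have hij' : 0 < E i j := Nat.pos_of_ne_zero hij
  obtain ⟨k, hk, hmin⟩ := wf.has_min {k | 0 < E i k} ⟨j, hij'⟩
  have hk' : E i k ≠ 0 := Nat.pos_iff_ne_zero.mp hk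
  rw [hmul] at hk'
  obtain ⟨l, -, hl⟩ := Finset.exists_ne_zero_of_sum_ne_zero hk'
  exact hmin l (Nat.pos_of_ne_zero (left_ne_zero_of_mul hl))
    (Nat.pos_of_ne_zero (right_ne_zero_of_mul hl))

theorem minors_zero {d m : ℕ} (X : Matrix (Fin d) (Fin d) ℕ)
    (hpos : ∀ i j, 0 < X i j) (hXX : X * X = m • X) (a b i k : Fin d) :
    X i b * X k a = X k b * X i a := by
  obtain ⟨i0, -, hi0⟩ := Finset.exists_min_image Finset.univ
    (fun i => (X i b : ℚ) / X i a) ⟨a, Finset.mem_univ a⟩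
  have hpq : ∀ i j, (0 : ℚ) < X i j := fun i j => by exact_mod_cast hpos i j
  have hmul : ∀ i j, ∑ l, (X i l : ℚ) * X l j = m * X i j := fun i j => by
    have := congrFun (congrFun hXX i) j
    simp only [Matrix.mul_apply, Matrix.smul_apply, smul_eq_mul] at this
    exact_mod_cast this
  have hz : ∀ i, (0 : ℚ) ≤ X i b * X i0 a - X i0 b * X i a := fun i => by
    have := hi0 i (Finset.mem_univ i)
    rw [div_le_div_iff₀ (hpq _ _) (hpq _ _)] at this
    linarith
  have hsum : ∑ l, (X i0 l : ℚ) * (X l b * X i0 a - X i0 b * X l a) = 0 := by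
    have : ∀ l, (X i0 l : ℚ) * (X l b * X i0 a - X i0 b * X l a)
        = (X i0 l * X l b) * X i0 a - (X i0 l * X l a) * X i0 b := fun l => by ring
    simp only [this, Finset.sum_sub_distrib, ← Finset.sum_mul, hmul]
    ring
  rw [Finset.sum_eq_zero_iff_of_nonneg
    (fun l _ => mul_nonneg (hpq i0 l).le (hz l))] at hsum
  have hzero : ∀ l, (X l b * X i0 a : ℚ) = X i0 b * X l a := fun l => by
    rcases mul_eq_zero.mp (hsum l (Finset.mem_univ l)) with h | h
    · exact absurd h (hpq i0 l).ne'
    · linarith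
  have h1 := hzero i
  have h2 := hzero k
  have : (X i b * X k a : ℚ) = X k b * X i a := by
    apply mul_right_cancel₀ (hpq i0 a).ne'
    linear_combination (X k a : ℚ) * h1 - (X i a : ℚ) * h2
  exact_mod_cast this

theorem trace_eq_m {d m : ℕ} (hd : 1 ≤ d) (X : Matrix (Fin d) (Fin d) ℕ)
    (hpos : ∀ i j, 0 < X i j) (hXX : X * X = m • X) : X.trace = m := by
  let i : Fin d := ⟨0, hd⟩
  have h := congrFun (congrFun hXX i) i
  simp only [Matrix.mul_apply, Matrix.smul_apply, smul_eq_mul] at h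
  have h2 : ∀ k, X i k * X k i = X k k * X i i := fun k => minors_zero X hpos hXX i k i k
  simp only [h2, ← Finset.sum_mul] at h
  exact Nat.eq_of_mul_eq_mul_right (hpos i i) h

theorem diag_zero_of_sq {d : ℕ} (N : Matrix (Fin d) (Fin d) ℕ) (hN : N * N = 0) :
    N.trace = 0 := by
  refine Finset.sum_eq_zero fun i _ => ?_
  have h := congrFun (congrFun hN i) i
  simp only [Matrix.mul_apply, Matrix.zero_apply, Finset.sum_eq_zero_iff] at h
  exact mul_self_eq_zero.mp (h i (Finset.mem_univ i))

/-- if `E 1, …, E m` are nonzero idempotent `d × d` matrices with nonnegative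
integer entries, `N 1, …, N r` are square-zero `d × d` matrices with nonnegative integer
entries, and `X = ∑ E s + ∑ N t` has strictly positive entries and satisfies `X² = m • X`,
then each `E s` has exactly one diagonal entry equal to `1` (all other diagonal entries `0`),
and whenever `E s`, `E s'` have their unit diagonal entry in the same position,
`E s * E s' ≠ 0`. -/
theorem stmt_8 (d m r : ℕ) (hd : 1 ≤ d) (hm : 1 ≤ m)
    (E : Fin m → Matrix (Fin d) (Fin d) ℕ)
    (hEne : ∀ s, E s ≠ 0)
    (hEidem : ∀ s, E s * E s = E s)
    (N : Fin r → Matrix (Fin d) (Fin d) ℕ)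
    (hNsq : ∀ t, N t * N t = 0)
    (X : Matrix (Fin d) (Fin d) ℕ)
    (hX : X = (∑ s, E s) + ∑ t, N t)
    (hpos : ∀ i j, 0 < X i j)
    (hXX : X * X = m • X) :
    (∀ s, ∃ i, E s i i = 1 ∧ ∀ j, j ≠ i → E s j j = 0) ∧
    (∀ s s' i, E s i i = 1 → E s' i i = 1 → E s * E s' ≠ 0) := by
  have htr : ∀ s, (E s).trace = 1 := by
    have h1 := trace_eq_m hd X hpos hXX
    rw [hX, Matrix.trace_add, Matrix.trace_sum, Matrix.trace_sum,
      Finset.sum_eq_zero (fun t _ => diag_zero_of_sq (N t) (hNsq t)), add_zero] at h1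
    have hge : ∀ s ∈ Finset.univ, 1 ≤ (E s).trace :=
      fun s _ => trace_pos_of_idem (E s) (hEne s) (hEidem s)
    have h2 : ∑ s : Fin m, 1 = ∑ s, (E s).trace := by simp [h1]
    intro s
    exact ((Finset.sum_eq_sum_iff_of_le hge).mp h2 s (Finset.mem_univ s)).symm
  refine ⟨fun s => ?_, fun s s' i h1 h2 h0 => ?_⟩
  · have h : ∑ i, E s i i = 1 := htr s
    obtain ⟨i, -, hi⟩ := Finset.exists_ne_zero_of_sum_ne_zero (by rw [h]; exact one_ne_zero)
    rw [← Finset.add_sum_erase _ _ (Finset.mem_univ i)] at h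
    refine ⟨i, by omega, fun j hj => ?_⟩
    have h3 : ∑ j ∈ Finset.univ.erase i, E s j j = 0 := by omega
    exact Finset.sum_eq_zero_iff.mp h3 j (Finset.mem_erase.mpr ⟨hj, Finset.mem_univ j⟩)
  · have h := congrFun (congrFun h0 i) i
    simp only [Matrix.mul_apply, Matrix.zero_apply, Finset.sum_eq_zero_iff] at h
    have := h i (Finset.mem_univ i)
    simp [h1, h2] at this
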